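/- arXiv:2006.09076 — 2 statements merged into one kernel-verified Lean document; each statement's English description precedes it below -/
import Mathlib

section
/- Transport relation for Hoffman's connected sum: let k be a nonempty index and l a nonempty admissible index. Then, as an identity in [0,∞], Z^H(k_→; l) = Z^H(k; ←l) + T(k; ←l). -/
open scoped Classical ENNReal

noncomputable section

/-- Last value of a tuple, with default `d` for the empty tuple. -/
def lastD {c : ℕ} (d : ℕ) (f : Fin c → ℕ) : ℕ :=
  if h : 0 < c then f ⟨c - 1, Nat.sub_lt h Nat.one_pos⟩ else d

/-- First value of a tuple, with default `d` for the empty tuple. -/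
def headD {c : ℕ} (d : ℕ) (f : Fin c → ℕ) : ℕ :=
  if h : 0 < c then f ⟨0, h⟩ else d

/-- Hoffman's connected sum `Z^H(k; l)`: the sum in `[0,∞]` of
`(∏_{i<a} nᵢ^(-kᵢ)) · nₐ^(-(kₐ-1)) · (m₁ - nₐ)⁻¹ · ∏_j m_j^(-l_j)`
over `0 < n₁ < ⋯ < nₐ < m₁ < ⋯ < m_b`. -/
def ZH (k l : List ℕ) : ℝ≥0∞ :=
  ∑' p : (Fin k.length → ℕ) × (Fin l.length → ℕ),
    Set.indicator
      {p : (Fin k.length → ℕ) × (Fin l.length → ℕ) |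
        (∀ i, 0 < p.1 i) ∧ StrictMono p.1 ∧ StrictMono p.2 ∧
          lastD 0 p.1 < headD 0 p.2}
      (fun p =>
        (∏ i, ((p.1 i : ℝ≥0∞) ^ (if i.1 = k.length - 1 then k.get i - 1 else k.get i))⁻¹) *
          ((headD 0 p.2 - lastD 0 p.1 : ℕ) : ℝ≥0∞)⁻¹ *
          ∏ j, ((p.2 j : ℝ≥0∞) ^ l.get j)⁻¹) p

/-- The multiple-zeta-type series `T(k; l)` of the concatenated index `(k, l)`:
the sum in `[0,∞]` of `(∏ nᵢ^(-kᵢ)) · (∏ m_j^(-l_j))` over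
`0 < n₁ < ⋯ < nₐ < m₁ < ⋯ < m_b`. -/
def Tser (k l : List ℕ) : ℝ≥0∞ :=
  ∑' p : (Fin k.length → ℕ) × (Fin l.length → ℕ),
    Set.indicator
      {p : (Fin k.length → ℕ) × (Fin l.length → ℕ) |
        (∀ i, 0 < p.1 i) ∧ StrictMono p.1 ∧ StrictMono p.2 ∧
          lastD 0 p.1 < headD 0 p.2}
      (fun p => (∏ i, ((p.1 i : ℝ≥0∞) ^ k.get i)⁻¹) * ∏ j, ((p.2 j : ℝ≥0∞) ^ l.get j)⁻¹) p

/-!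
Hoffman's connected sum is the multiple zeta series of `(k, l)` weighted by the connector
`C(x, y) = x / (y - x)` of the adjacent indices `x = nₐ` and `y = m₁`. On either side of the
relation exactly one index `q` runs over the gap `x < q < y`, all others being fixed, so the claim
is `∑ q⁻¹ C(q, y) = ∑ q⁻¹ (C(x, q) + 1)`. As `q⁻¹ C(q, y) = (y - q)⁻¹` and
`q⁻¹ (C(x, q) + 1) = (q - x)⁻¹`, this is the reflection `q ↦ x + y - q` of the gap.
-/

section Tuples

variable {α : Type*} {a : ℕ}

lemma strictMono_snoc_iff [Preorder α] (n : Fin (a + 1) → α) (q : α) :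
    StrictMono (Fin.snoc n q : Fin (a + 2) → α) ↔ StrictMono n ∧ n (Fin.last a) < q := by
  rw [Fin.strictMono_iff_lt_succ, Fin.strictMono_iff_lt_succ, Fin.forall_fin_succ']
  simp only [Fin.snoc_castSucc, Fin.succ_last, Fin.snoc_last, Fin.succ_castSucc]

lemma tsum_fin_snoc (F : (Fin (a + 1) → α) → ℝ≥0∞) :
    ∑' n, F n = ∑' (n : Fin a → α) (q : α), F (Fin.snoc n q) := by
  rw [← (Fin.snocEquiv fun _ => α).tsum_eq, ENNReal.tsum_prod', ENNReal.tsum_comm]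
  rfl

lemma tsum_fin_cons (F : (Fin (a + 1) → α) → ℝ≥0∞) :
    ∑' n, F n = ∑' (n : Fin a → α) (q : α), F (Fin.cons q n) := by
  rw [← (Fin.consEquiv fun _ => α).tsum_eq, ENNReal.tsum_prod', ENNReal.tsum_comm]
  rfl

lemma ofFn_snoc (f : Fin a → α) (x : α) :
    List.ofFn (Fin.snoc f x : Fin (a + 1) → α) = List.ofFn f ++ [x] := by
  simp only [List.ofFn_succ', Fin.snoc_castSucc, Fin.snoc_last, List.concat_eq_append]

lemma exists_ofFn_eq_of_ne_nil {k : List α} (hk : k ≠ []) :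
    ∃ (a : ℕ) (f : Fin (a + 1) → α), List.ofFn f = k := by
  obtain ⟨x, k, rfl⟩ := List.exists_cons_of_ne_nil hk
  exact ⟨k.length, (x :: k).get, List.ofFn_get _⟩

lemma sigma_get_ofFn (f : Fin a → α) :
    (⟨(List.ofFn f).length, (List.ofFn f).get⟩ : Σ n, Fin n → α) = ⟨a, f⟩ :=
  List.equivSigmaTuple.right_inv ⟨a, f⟩

end Tuples

lemma tsum_ite_and_mem {α M : Type*} [AddCommMonoid M] [TopologicalSpace M] (P : Prop)
    [Decidable P] (s : Finset α) [∀ q, Decidable (P ∧ q ∈ s)] (f : α → M) :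
    ∑' q, (if P ∧ q ∈ s then f q else 0) = if P then ∑ q ∈ s, f q else 0 := by
  rw [tsum_eq_sum fun q hq => if_neg fun h => hq h.2]
  split_ifs with hP
  · exact Finset.sum_congr rfl fun q hq => if_pos ⟨hP, hq⟩
  · exact Finset.sum_eq_zero fun q _ => if_neg fun h => hP h.1

lemma sum_Ioo_reflect {M : Type*} [AddCommMonoid M] (f : ℕ → M) (x y : ℕ) :
    ∑ q ∈ Finset.Ioo x y, f (y - q) = ∑ q ∈ Finset.Ioo x y, f (q - x) := by
  have maps_to : ∀ q ∈ Finset.Ioo x y, x + y - q ∈ Finset.Ioo x y := by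
    simp only [Finset.mem_Ioo]
    omega
  have involutive : ∀ q ∈ Finset.Ioo x y, x + y - (x + y - q) = q := by
    simp only [Finset.mem_Ioo]
    omega
  refine Finset.sum_nbij' (x + y - ·) (x + y - ·) maps_to maps_to involutive involutive ?_
  intro q hq
  rw [Finset.mem_Ioo] at hq
  congr 1
  omega

/-- The connector `x / (y - x)` of Hoffman's connected sum, meaningful for `x < y` only, as the
natural subtraction truncates. -/
def connector (x y : ℕ) : ℝ≥0∞ := x * ((y - x : ℕ) : ℝ≥0∞)⁻¹

lemma inv_mul_connector {q : ℕ} (hq : 0 < q) (y : ℕ) :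
    (q : ℝ≥0∞)⁻¹ * connector q y = ((y - q : ℕ) : ℝ≥0∞)⁻¹ :=
  ENNReal.inv_mul_cancel_left (by exact_mod_cast hq.ne') (ENNReal.natCast_ne_top q)

lemma inv_mul_connector_add_one {x q : ℕ} (hxq : x < q) :
    (q : ℝ≥0∞)⁻¹ * (connector x q + 1) = ((q - x : ℕ) : ℝ≥0∞)⁻¹ := by
  have gap_ne_zero : ((q - x : ℕ) : ℝ≥0∞) ≠ 0 := by exact_mod_cast (Nat.sub_pos_of_lt hxq).ne'
  have connector_add_one : connector x q + 1 = q * ((q - x : ℕ) : ℝ≥0∞)⁻¹ :=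
    calc connector x q + 1
        = x * ((q - x : ℕ) : ℝ≥0∞)⁻¹ + (q - x : ℕ) * ((q - x : ℕ) : ℝ≥0∞)⁻¹ := by
          rw [connector, ENNReal.mul_inv_cancel gap_ne_zero (ENNReal.natCast_ne_top _)]
      _ = (x + (q - x) : ℕ) * ((q - x : ℕ) : ℝ≥0∞)⁻¹ := by rw [← add_mul, Nat.cast_add]
      _ = q * ((q - x : ℕ) : ℝ≥0∞)⁻¹ := by rw [Nat.add_sub_cancel' hxq.le]
  rw [connector_add_one]
  exact ENNReal.inv_mul_cancel_left (by exact_mod_cast Nat.ne_zero_of_lt hxq)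
    (ENNReal.natCast_ne_top q)

lemma sum_Ioo_connector_transport (x y : ℕ) :
    ∑ q ∈ Finset.Ioo x y, (q : ℝ≥0∞)⁻¹ * connector q y =
      ∑ q ∈ Finset.Ioo x y, (q : ℝ≥0∞)⁻¹ * (connector x q + 1) :=
  calc ∑ q ∈ Finset.Ioo x y, (q : ℝ≥0∞)⁻¹ * connector q y
      = ∑ q ∈ Finset.Ioo x y, ((y - q : ℕ) : ℝ≥0∞)⁻¹ :=
        Finset.sum_congr rfl fun _ hq =>
          inv_mul_connector (Nat.zero_lt_of_lt (Finset.mem_Ioo.1 hq).1) y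
    _ = ∑ q ∈ Finset.Ioo x y, ((q - x : ℕ) : ℝ≥0∞)⁻¹ :=
        sum_Ioo_reflect (fun d => (d : ℝ≥0∞)⁻¹) x y
    _ = ∑ q ∈ Finset.Ioo x y, (q : ℝ≥0∞)⁻¹ * (connector x q + 1) :=
        Finset.sum_congr rfl fun _ hq =>
          (inv_mul_connector_add_one (Finset.mem_Ioo.1 hq).1).symm

/-- The monomial `∏ᵢ nᵢ^(-kᵢ)`, the general term of a multiple zeta series. -/
def zetaTerm {a : ℕ} (k n : Fin a → ℕ) : ℝ≥0∞ := ∏ i, ((n i : ℝ≥0∞) ^ k i)⁻¹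

section zetaTerm

variable {a b : ℕ}

lemma zetaTerm_snoc (k n : Fin a → ℕ) (e q : ℕ) :
    zetaTerm (Fin.snoc k e : Fin (a + 1) → ℕ) (Fin.snoc n q) =
      zetaTerm k n * ((q : ℝ≥0∞) ^ e)⁻¹ := by
  simp only [zetaTerm, Fin.prod_univ_castSucc, Fin.snoc_castSucc, Fin.snoc_last]

lemma zetaTerm_cons (k n : Fin a → ℕ) (e q : ℕ) :
    zetaTerm (Fin.cons e k : Fin (a + 1) → ℕ) (Fin.cons q n) =
      ((q : ℝ≥0∞) ^ e)⁻¹ * zetaTerm k n := by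
  simp only [zetaTerm, Fin.prod_univ_succ, Fin.cons_zero, Fin.cons_succ]

lemma prod_lower_last_exponent {k n : Fin (a + 1) → ℕ} (hk : 1 ≤ k (Fin.last a))
    (hn : 0 < n (Fin.last a)) :
    ∏ i, ((n i : ℝ≥0∞) ^ (if i.1 = a then k i - 1 else k i))⁻¹ =
      zetaTerm k n * n (Fin.last a) := by
  obtain ⟨e, he⟩ := Nat.exists_eq_add_of_le' hk
  have last_factor : ((n (Fin.last a) : ℝ≥0∞) ^ e)⁻¹ =
      ((n (Fin.last a) : ℝ≥0∞) ^ (e + 1))⁻¹ * n (Fin.last a) := by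
    rw [pow_succ, ENNReal.mul_inv (by simp) (by simp), mul_assoc,
      ENNReal.inv_mul_cancel (by simp [hn.ne']) (by simp), mul_one]
  simp only [zetaTerm, Fin.prod_univ_castSucc, Fin.val_castSucc, Fin.val_last, if_true,
    (Fin.is_lt _).ne, if_false, he, Nat.add_sub_cancel, last_factor, mul_assoc]

lemma sum_Ioo_zetaTerm_transport (k n : Fin a → ℕ) (l m : Fin b → ℕ) (x y : ℕ) :
    ∑ q ∈ Finset.Ioo x y, zetaTerm (Fin.snoc k 1 : Fin (a + 1) → ℕ) (Fin.snoc n q) *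
        connector q y * zetaTerm l m =
      ∑ q ∈ Finset.Ioo x y,
        (zetaTerm k n * connector x q * zetaTerm (Fin.cons 1 l : Fin (b + 1) → ℕ) (Fin.cons q m) +
          zetaTerm k n * zetaTerm (Fin.cons 1 l : Fin (b + 1) → ℕ) (Fin.cons q m)) := by
  simp only [zetaTerm_snoc, zetaTerm_cons, pow_one]
  calc ∑ q ∈ Finset.Ioo x y, zetaTerm k n * (q : ℝ≥0∞)⁻¹ * connector q y * zetaTerm l m
      = zetaTerm k n * zetaTerm l m * ∑ q ∈ Finset.Ioo x y, (q : ℝ≥0∞)⁻¹ * connector q y := by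
        rw [Finset.mul_sum]
        exact Finset.sum_congr rfl fun _ _ => by ring
    _ = zetaTerm k n * zetaTerm l m *
          ∑ q ∈ Finset.Ioo x y, (q : ℝ≥0∞)⁻¹ * (connector x q + 1) := by
        rw [sum_Ioo_connector_transport]
    _ = ∑ q ∈ Finset.Ioo x y, (zetaTerm k n * connector x q * ((q : ℝ≥0∞)⁻¹ * zetaTerm l m) +
          zetaTerm k n * ((q : ℝ≥0∞)⁻¹ * zetaTerm l m)) := by
        rw [Finset.mul_sum]
        exact Finset.sum_congr rfl fun _ _ => by ring

end zetaTerm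

/-- The summation condition `0 < n₀ < ⋯ < nₐ < m₀ < ⋯ < m_b` of connected sums. -/
def IsIncreasingPair {a b : ℕ} (n : Fin (a + 1) → ℕ) (m : Fin (b + 1) → ℕ) : Prop :=
  (∀ i, 0 < n i) ∧ StrictMono n ∧ StrictMono m ∧ n (Fin.last a) < m 0

/-- The sum of `F n m` over all `0 < n₀ < ⋯ < nₐ < m₀ < ⋯ < m_b`, the common shape of `ZH` and
`Tser` on nonempty indices. -/
def increasingPairSum {a b : ℕ} (F : (Fin (a + 1) → ℕ) → (Fin (b + 1) → ℕ) → ℝ≥0∞) : ℝ≥0∞ :=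
  ∑' (n) (m), if IsIncreasingPair n m then F n m else 0

section increasingPairSum

variable {a b : ℕ}

lemma isIncreasingPair_snoc_iff (n : Fin (a + 1) → ℕ) (q : ℕ) (m : Fin (b + 1) → ℕ) :
    IsIncreasingPair (Fin.snoc n q : Fin (a + 2) → ℕ) m ↔
      IsIncreasingPair n m ∧ q ∈ Finset.Ioo (n (Fin.last a)) (m 0) := by
  simp only [IsIncreasingPair, strictMono_snoc_iff, Fin.forall_fin_succ', Fin.snoc_castSucc,
    Fin.snoc_last, Finset.mem_Ioo]
  constructor
  · rintro ⟨⟨n_pos, -⟩, ⟨n_mono, n_lt_q⟩, m_mono, q_lt_m⟩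
    exact ⟨⟨n_pos, n_mono, m_mono, n_lt_q.trans q_lt_m⟩, n_lt_q, q_lt_m⟩
  · rintro ⟨⟨n_pos, n_mono, m_mono, -⟩, n_lt_q, q_lt_m⟩
    exact ⟨⟨n_pos, Nat.zero_lt_of_lt n_lt_q⟩, ⟨n_mono, n_lt_q⟩, m_mono, q_lt_m⟩

lemma isIncreasingPair_cons_iff (n : Fin (a + 1) → ℕ) (q : ℕ) (m : Fin (b + 1) → ℕ) :
    IsIncreasingPair n (Fin.cons q m : Fin (b + 2) → ℕ) ↔
      IsIncreasingPair n m ∧ q ∈ Finset.Ioo (n (Fin.last a)) (m 0) := by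
  have cons_mono_iff : StrictMono (Fin.cons q m : Fin (b + 2) → ℕ) ↔ q < m 0 ∧ StrictMono m :=
    strictMono_vecCons
  simp only [IsIncreasingPair, cons_mono_iff, Fin.cons_zero, Finset.mem_Ioo]
  constructor
  · rintro ⟨n_pos, n_mono, ⟨q_lt_m, m_mono⟩, n_lt_q⟩
    exact ⟨⟨n_pos, n_mono, m_mono, n_lt_q.trans q_lt_m⟩, n_lt_q, q_lt_m⟩
  · rintro ⟨⟨n_pos, n_mono, m_mono, -⟩, n_lt_q, q_lt_m⟩
    exact ⟨n_pos, n_mono, ⟨q_lt_m, m_mono⟩, n_lt_q⟩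

lemma increasingPairSum_congr {F G : (Fin (a + 1) → ℕ) → (Fin (b + 1) → ℕ) → ℝ≥0∞}
    (h : ∀ n m, IsIncreasingPair n m → F n m = G n m) :
    increasingPairSum F = increasingPairSum G :=
  tsum_congr fun n => tsum_congr fun m => ite_congr rfl (h n m) fun _ => rfl

lemma increasingPairSum_snoc (F : (Fin (a + 2) → ℕ) → (Fin (b + 1) → ℕ) → ℝ≥0∞) :
    increasingPairSum F = increasingPairSum fun (n : Fin (a + 1) → ℕ) m =>
      ∑ q ∈ Finset.Ioo (n (Fin.last a)) (m 0), F (Fin.snoc n q) m := by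
  rw [increasingPairSum, tsum_fin_snoc]
  refine tsum_congr fun n => ?_
  rw [ENNReal.tsum_comm]
  simp only [isIncreasingPair_snoc_iff, tsum_ite_and_mem]

lemma increasingPairSum_cons (F : (Fin (a + 1) → ℕ) → (Fin (b + 2) → ℕ) → ℝ≥0∞) :
    increasingPairSum F = increasingPairSum fun n (m : Fin (b + 1) → ℕ) =>
      ∑ q ∈ Finset.Ioo (n (Fin.last a)) (m 0), F n (Fin.cons q m) := by
  refine tsum_congr fun n => ?_
  rw [tsum_fin_cons]
  simp only [isIncreasingPair_cons_iff, tsum_ite_and_mem]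

lemma increasingPairSum_add (F G : (Fin (a + 1) → ℕ) → (Fin (b + 1) → ℕ) → ℝ≥0∞) :
    increasingPairSum (fun n m => F n m + G n m) = increasingPairSum F + increasingPairSum G := by
  simp only [increasingPairSum, ← ENNReal.tsum_add, ite_add_ite, add_zero]

lemma tsum_indicator_ofFn_eq_increasingPairSum
    (W : ∀ {c d : ℕ}, (Fin c → ℕ) → (Fin d → ℕ) → (Fin c → ℕ) → (Fin d → ℕ) → ℝ≥0∞)
    (k : Fin (a + 1) → ℕ) (l : Fin (b + 1) → ℕ) :
    ∑' p : (Fin (List.ofFn k).length → ℕ) × (Fin (List.ofFn l).length → ℕ),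
      Set.indicator {p | (∀ i, 0 < p.1 i) ∧ StrictMono p.1 ∧ StrictMono p.2 ∧
        lastD 0 p.1 < headD 0 p.2} (fun p => W (List.ofFn k).get (List.ofFn l).get p.1 p.2) p =
      increasingPairSum (W k l) := by
  -- `(List.ofFn k).length` is `a + 1` only propositionally, so the lengths and the entries are
  -- replaced together.
  have k_get := sigma_get_ofFn k
  have l_get := sigma_get_ofFn l
  generalize (List.ofFn k).get = f, (List.ofFn l).get = g at k_get l_get ⊢
  generalize (List.ofFn k).length = c, (List.ofFn l).length = d at f g k_get l_get ⊢
  cases k_get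
  cases l_get
  rw [increasingPairSum, ← ENNReal.tsum_prod]
  refine tsum_congr fun p => ?_
  rw [Set.indicator_apply]
  exact ite_congr rfl (fun _ => rfl) fun _ => rfl

lemma Tser_ofFn (k : Fin (a + 1) → ℕ) (l : Fin (b + 1) → ℕ) :
    Tser (List.ofFn k) (List.ofFn l) = increasingPairSum fun n m => zetaTerm k n * zetaTerm l m :=
  tsum_indicator_ofFn_eq_increasingPairSum (fun k l n m => zetaTerm k n * zetaTerm l m) k l

lemma ZH_ofFn {k : Fin (a + 1) → ℕ} (hk : 1 ≤ k (Fin.last a)) (l : Fin (b + 1) → ℕ) :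
    ZH (List.ofFn k) (List.ofFn l) = increasingPairSum fun n m =>
      zetaTerm k n * connector (n (Fin.last a)) (m 0) * zetaTerm l m :=
  calc ZH (List.ofFn k) (List.ofFn l)
      = increasingPairSum fun n m =>
          (∏ i, ((n i : ℝ≥0∞) ^ (if i.1 = a then k i - 1 else k i))⁻¹) *
            ((m 0 - n (Fin.last a) : ℕ) : ℝ≥0∞)⁻¹ * zetaTerm l m :=
        tsum_indicator_ofFn_eq_increasingPairSum
          (fun {c _} k l n m =>
            (∏ i, ((n i : ℝ≥0∞) ^ (if i.1 = c - 1 then k i - 1 else k i))⁻¹) *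
              ((headD 0 m - lastD 0 n : ℕ) : ℝ≥0∞)⁻¹ * zetaTerm l m) k l
    _ = increasingPairSum fun n m =>
          zetaTerm k n * connector (n (Fin.last a)) (m 0) * zetaTerm l m := by
        refine increasingPairSum_congr fun n m hnm => ?_
        rw [prod_lower_last_exponent hk (hnm.1 _), connector, mul_assoc (zetaTerm k n)]

end increasingPairSum

theorem ZH_transport_arrow_general (k l : List ℕ) (hk : k ≠ []) (hk_last : 1 ≤ k.getLast hk)
    (hl : l ≠ []) : ZH (k ++ [1]) l = ZH k (1 :: l) + Tser k (1 :: l) := by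
  obtain ⟨a, k, rfl⟩ := exists_ofFn_eq_of_ne_nil hk
  obtain ⟨b, l, rfl⟩ := exists_ofFn_eq_of_ne_nil hl
  rw [List.getLast_ofFn_succ] at hk_last
  rw [← ofFn_snoc, ← List.ofFn_cons, ZH_ofFn (by simp), ZH_ofFn hk_last, Tser_ofFn,
    ← increasingPairSum_add, increasingPairSum_snoc, increasingPairSum_cons]
  simp only [Fin.snoc_last, Fin.cons_zero, sum_Ioo_zetaTerm_transport]

/-- **Transport relation for Hoffman's connected sum:**
for a nonempty index `k` and a nonempty admissible index `l`,
`Z^H(k_→; l) = Z^H(k; ←l) + T(k; ←l)` in `[0,∞]`,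
where `k_→ = k ++ [1]` and `←l = 1 :: l`. -/
theorem ZH_transport_arrow (k l : List ℕ)
    (hk : k ≠ []) (hk1 : ∀ i ∈ k, 1 ≤ i)
    (hl : l ≠ []) (hl1 : ∀ i ∈ l, 1 ≤ i) (hla : 2 ≤ l.getLast hl) :
    ZH (k ++ [1]) l = ZH k (1 :: l) + Tser k (1 :: l) :=
  ZH_transport_arrow_general k l hk (hk1 _ (List.getLast_mem hk)) hl
end
end

section
/- Transport relation for Ohno's cyclic connected sum: for every index k=(k_1,…,k_a) with a≥2 and every positive integer N, one has Z^O_N(k_↑) = Z^O_N(↑k) − ζ_N(k_↑). -/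
open scoped Classical

noncomputable section

/-- The multiple harmonic sum `ζ_N(k) = Σ_{0 < n₁ < ⋯ < nₐ ≤ N} ∏ nᵢ^(-kᵢ)`. -/
def mhs (N : ℕ) (k : List ℕ) : ℚ :=
  ∑ n ∈ Finset.univ.filter
      (fun n : Fin k.length → Fin (N + 1) => (∀ i, 0 < (n i : ℕ)) ∧ StrictMono n),
    ∏ i, (((n i : ℕ) : ℚ) ^ k.get i)⁻¹

/-- Ohno's cyclic connected sum `Z^O_N(k)`: the sum of
`n₁^(-(k₁-1)) · (∏_{i≥2} nᵢ^(-kᵢ)) · (nₐ - n₁)⁻¹` over `0 < n₁ < ⋯ < nₐ ≤ N`. -/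
def ZO (N : ℕ) (k : List ℕ) : ℚ :=
  ∑ n ∈ Finset.univ.filter
      (fun n : Fin k.length → Fin (N + 1) => (∀ i, 0 < (n i : ℕ)) ∧ StrictMono n),
    (∏ i, (((n i : ℕ) : ℚ) ^ (if i.1 = 0 then k.get i - 1 else k.get i))⁻¹) *
      (((lastD 0 (fun i => (n i : ℕ)) - headD 0 (fun i => (n i : ℕ)) : ℕ) : ℚ))⁻¹

/-- `k_↑`: increase the last entry of an index by `1` (`∅_↑ = ∅`). -/
def upLast : List ℕ → List ℕ
  | [] => []
  | k => k.dropLast ++ [k.getLast! + 1]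

/-- `↑k`: increase the first entry of an index by `1` (`↑∅ = ∅`). -/
def upFirst : List ℕ → List ℕ
  | [] => []
  | a :: k => (a + 1) :: k

/-!
Let `e` be the index `k` with its first entry lowered by one, and put `w = ∏ nᵢ^(-eᵢ)`, `x = n₁`,
`y = nₐ`. At each tuple `n` the summands of `Z^O_N(k_↑)`, `Z^O_N(↑k)` and `ζ_N(k_↑)` are
`w / (y (y - x))`, `w / (x (y - x))` and `w / (x y)`, so the relation holds termwise by the partial
fraction identity `1 / (y (y - x)) = 1 / (x (y - x)) - 1 / (x y)`.
-/

/-- The index set `0 < n₁ < ⋯ < n_c ≤ N` over which both `mhs` and `ZO` sum,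
encoded with entries in `Fin (N + 1)` as in those definitions. -/
def increasingTuples (N c : ℕ) : Finset (Fin c → Fin (N + 1)) :=
  Finset.univ.filter fun n => (∀ i, 0 < (n i : ℕ)) ∧ StrictMono n

theorem pos_of_mem_increasingTuples {N c : ℕ} {n : Fin c → Fin (N + 1)}
    (hn : n ∈ increasingTuples N c) (i : Fin c) : 0 < (n i : ℕ) :=
  (Finset.mem_filter.1 hn).2.1 i

theorem strictMono_of_mem_increasingTuples {N c : ℕ} {n : Fin c → Fin (N + 1)}
    (hn : n ∈ increasingTuples N c) : StrictMono n :=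
  (Finset.mem_filter.1 hn).2.2

theorem headD_succ {m : ℕ} (d : ℕ) (f : Fin (m + 1) → ℕ) : headD d f = f 0 :=
  dif_pos m.succ_pos

theorem lastD_succ {m : ℕ} (d : ℕ) (f : Fin (m + 1) → ℕ) : lastD d f = f (Fin.last m) :=
  dif_pos m.succ_pos

theorem upFirst_ofFn {m : ℕ} (e : Fin (m + 1) → ℕ) :
    upFirst (List.ofFn e) = List.ofFn (e + Pi.single 0 1) := by
  simp [List.ofFn_succ, upFirst]

theorem upLast_concat (l : List ℕ) (b : ℕ) : upLast (l ++ [b]) = l ++ [b + 1] := by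
  have upLast_of_ne_nil {k : List ℕ} (hk : k ≠ []) :
      upLast k = k.dropLast ++ [k.getLast! + 1] := by
    cases k with
    | nil => contradiction
    | cons => rfl
  rw [upLast_of_ne_nil (List.concat_ne_nil b l), List.dropLast_concat,
    List.getLast!_eq_getLast?_getD, List.getLast?_concat, Option.getD_some]

theorem upLast_ofFn {m : ℕ} (e : Fin (m + 1) → ℕ) :
    upLast (List.ofFn e) = List.ofFn (e + Pi.single (Fin.last m) 1) := by
  rw [List.ofFn_succ' e, List.ofFn_succ' (e + _), List.concat_eq_append, List.concat_eq_append,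
    upLast_concat]
  simp [(Fin.castSucc_lt_last _).ne]

theorem mhs_ofFn (N : ℕ) {c : ℕ} (e : Fin c → ℕ) :
    mhs N (List.ofFn e) =
      ∑ n ∈ increasingTuples N c, ∏ i, (((n i : ℕ) : ℚ) ^ e i)⁻¹ := by
  have mhs_of_length_eq (k : List ℕ) (h : k.length = c) : mhs N k =
      ∑ n ∈ increasingTuples N c, ∏ i, (((n i : ℕ) : ℚ) ^ k.get (i.cast h.symm))⁻¹ := by
    subst h
    rfl
  simpa using mhs_of_length_eq (List.ofFn e) List.length_ofFn

theorem ZO_ofFn (N : ℕ) {c : ℕ} (e : Fin c → ℕ) :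
    ZO N (List.ofFn e) =
      ∑ n ∈ increasingTuples N c,
        (∏ i, (((n i : ℕ) : ℚ) ^ (if i.1 = 0 then e i - 1 else e i))⁻¹) *
          ((lastD 0 (fun i => (n i : ℕ)) - headD 0 (fun i => (n i : ℕ)) : ℕ) : ℚ)⁻¹ := by
  have ZO_of_length_eq (k : List ℕ) (h : k.length = c) : ZO N k =
      ∑ n ∈ increasingTuples N c,
        (∏ i, (((n i : ℕ) : ℚ) ^
          (if i.1 = 0 then k.get (i.cast h.symm) - 1 else k.get (i.cast h.symm)))⁻¹) *
          ((lastD 0 (fun i => (n i : ℕ)) - headD 0 (fun i => (n i : ℕ)) : ℕ) : ℚ)⁻¹ := by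
    subst h
    rfl
  simpa using ZO_of_length_eq (List.ofFn e) List.length_ofFn

theorem ZO_ofFn_add_single (N : ℕ) {m : ℕ} (e : Fin (m + 1) → ℕ) :
    ZO N (List.ofFn (e + Pi.single 0 1)) =
      ∑ n ∈ increasingTuples N (m + 1),
        (∏ i, (((n i : ℕ) : ℚ) ^ e i)⁻¹) * (((n (Fin.last m) : ℕ) : ℚ) - (n 0 : ℕ))⁻¹ := by
  rw [ZO_ofFn]
  refine Finset.sum_congr rfl fun n hn => ?_
  have first_le_last : (n 0 : ℕ) ≤ n (Fin.last m) :=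
    (strictMono_of_mem_increasingTuples hn).monotone (Fin.zero_le _)
  have exponent_eq (i : Fin (m + 1)) :
      (if i.1 = 0 then (e + Pi.single 0 1 : Fin (m + 1) → ℕ) i - 1
        else (e + Pi.single 0 1 : Fin (m + 1) → ℕ) i) = e i := by
    rcases eq_or_ne i 0 with rfl | hi <;> simp [*]
  simp only [exponent_eq, lastD_succ, headD_succ, Nat.cast_sub first_le_last]

theorem prod_inv_pow_add_single {ι M : Type*} [Fintype ι] [DecidableEq ι] [DivisionCommMonoid M]
    (x : ι → M) (e : ι → ℕ) (j : ι) :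
    ∏ i, (x i ^ (e + Pi.single j 1 : ι → ℕ) i)⁻¹ = (∏ i, (x i ^ e i)⁻¹) * (x j)⁻¹ := by
  simp only [Pi.add_apply, Pi.single_apply, eq_comm (b := j), pow_add, mul_inv,
    Finset.prod_mul_distrib, Finset.prod_inv_distrib, Finset.prod_pow_boole, Finset.mem_univ,
    if_true]

theorem inv_mul_inv_sub_eq {K : Type*} [Field K] {x y : K}
    (hx : x ≠ 0) (hy : y ≠ 0) (hxy : x ≠ y) :
    y⁻¹ * (y - x)⁻¹ = x⁻¹ * (y - x)⁻¹ - x⁻¹ * y⁻¹ := by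
  have hyx : y - x ≠ 0 := sub_ne_zero.2 hxy.symm
  field_simp
  ring

theorem exists_eq_ofFn_add_single {m : ℕ} {k : List ℕ} (hlen : k.length = m + 1)
    (hhead : 1 ≤ k[0]) : ∃ e : Fin (m + 1) → ℕ, k = List.ofFn (e + Pi.single 0 1) := by
  obtain ⟨f, rfl⟩ : ∃ f : Fin (m + 1) → ℕ, k = List.ofFn f :=
    ⟨fun i => k.get (i.cast hlen.symm), by rw [← List.ofFn_congr hlen, List.ofFn_get]⟩
  have single_le : Pi.single 0 1 ≤ f :=
    update_le_iff.2 ⟨by simpa using hhead, fun i _ => Nat.zero_le _⟩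
  exact ⟨f - Pi.single 0 1, by rw [tsub_add_cancel_of_le single_le]⟩

theorem ZO_transport_general (N : ℕ) (k : List ℕ) (hk : 2 ≤ k.length) (hhead : 1 ≤ k[0]) :
    ZO N (upLast k) = ZO N (upFirst k) - mhs N (upLast k) := by
  obtain ⟨m, hm⟩ := Nat.exists_eq_add_of_le' hk
  obtain ⟨e, rfl⟩ := exists_eq_ofFn_add_single hm hhead
  rw [upFirst_ofFn, upLast_ofFn, mhs_ofFn, ZO_ofFn_add_single, add_right_comm e,
    ZO_ofFn_add_single, ← Finset.sum_sub_distrib]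
  refine Finset.sum_congr rfl fun n hn => ?_
  have entry_ne_zero (i : Fin (m + 2)) : ((n i : ℕ) : ℚ) ≠ 0 :=
    Nat.cast_ne_zero.2 (pos_of_mem_increasingTuples hn i).ne'
  have first_ne_last : ((n 0 : ℕ) : ℚ) ≠ (n (Fin.last (m + 1)) : ℕ) :=
    Nat.cast_injective.ne
      (Fin.val_injective.ne (strictMono_of_mem_increasingTuples hn Fin.last_pos).ne)
  simp only [prod_inv_pow_add_single fun i => ((n i : ℕ) : ℚ)]
  linear_combination (∏ i, (((n i : ℕ) : ℚ) ^ e i)⁻¹) *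
    inv_mul_inv_sub_eq (entry_ne_zero 0) (entry_ne_zero _) first_ne_last

/-- **Transport relation for Ohno's cyclic connected sum:**
`Z^O_N(k_↑) = Z^O_N(↑k) - ζ_N(k_↑)` for every index `k` of length `≥ 2`
and every `N ≥ 1`. -/
theorem ZO_transport (N : ℕ) (hN : 0 < N) (k : List ℕ)
    (hk : 2 ≤ k.length) (hk1 : ∀ i ∈ k, 1 ≤ i) :
    ZO N (upLast k) = ZO N (upFirst k) - mhs N (upLast k) :=
  ZO_transport_general N k hk (hk1 _ (List.getElem_mem _))
end
end
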